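/- Let A : ℝ³ → ℝ³ be a smooth vector potential with magnetic field B = ∇×A, let q ∈ ℝ³ with B(q) ≠ 0, and let (b, c, d) be a direct orthonormal basis with b = B(q)/‖B(q)‖. Let Q be the symmetric bilinear form on ℝ³×ℝ³ defined by Q((U₁,V₁),(U₂,V₂)) = 2⟨V₁ − DA(q)U₁, V₂ − DA(q)U₂⟩ (the Hessian of H(q,p) = ‖p−A(q)‖² at (q,A(q))). Set f₄ = ‖B(q)‖^{-1/2}(c, DA(q)ᵀc), f₅ = ‖B(q)‖^{-1/2}(d, DA(q)ᵀd) and f₆ = (W, b + DA(q)W) for an arbitrary W ∈ ℝ³. Then Q(f₄,f₄) = Q(f₅,f₅) = 2‖B(q)‖, Q(f₄,f₅) = 0, Q(f₄,f₆) = Q(f₅,f₆) = 0 and Q(f₆,f₆) = 2; moreover Q((U, DA(q)U), X) = 0 for every U ∈ ℝ³ and every X ∈ ℝ³×ℝ³ (the Hessian vanishes on tangent vectors to Σ). -/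

import Mathlib

open Matrix

noncomputable section

/-- The curl `∇ × A` of a vector field on `ℝ³`. -/
def curl (A : (Fin 3 → ℝ) → (Fin 3 → ℝ)) (q : Fin 3 → ℝ) : Fin 3 → ℝ :=
  ![fderiv ℝ (fun x => A x 2) q (Pi.single 1 1) - fderiv ℝ (fun x => A x 1) q (Pi.single 2 1),
    fderiv ℝ (fun x => A x 0) q (Pi.single 2 1) - fderiv ℝ (fun x => A x 2) q (Pi.single 0 1),
    fderiv ℝ (fun x => A x 1) q (Pi.single 0 1) - fderiv ℝ (fun x => A x 0) q (Pi.single 1 1)]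

/-- The Euclidean norm on `ℝ³` (as `Fin 3 → ℝ`). -/
def norm3 (v : Fin 3 → ℝ) : ℝ := Real.sqrt (v ⬝ᵥ v)

/-- The canonical symplectic form on `ℝ⁶ = ℝ³ × ℝ³`:
`ω₀((u₁,u₂),(v₁,v₂)) = ⟨v₁,u₂⟩ − ⟨v₂,u₁⟩`. -/
def omega0 (u v : (Fin 3 → ℝ) × (Fin 3 → ℝ)) : ℝ :=
  v.1 ⬝ᵥ u.2 - v.2 ⬝ᵥ u.1

/-- The adjoint (transpose with respect to the Euclidean dot product) of a continuous
linear map `ℝ³ → ℝ³`. -/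
def adjoint3 (L : (Fin 3 → ℝ) →L[ℝ] (Fin 3 → ℝ)) (w : Fin 3 → ℝ) : Fin 3 → ℝ :=
  fun i => (L (Pi.single i 1)) ⬝ᵥ w

/-- The Hessian of the magnetic Hamiltonian `H(q,p) = ‖p − A(q)‖²` at `(q, A(q))`:
`Q((U₁,V₁),(U₂,V₂)) = 2⟨V₁ − DA(q)U₁, V₂ − DA(q)U₂⟩`. -/
def hessQ (A : (Fin 3 → ℝ) → (Fin 3 → ℝ)) (q : Fin 3 → ℝ)
    (x y : (Fin 3 → ℝ) × (Fin 3 → ℝ)) : ℝ :=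
  2 * ((x.2 - fderiv ℝ A q x.1) ⬝ᵥ (y.2 - fderiv ℝ A q y.1))

/-!
With `L = DA(q)` and `B = curl A q`, the Hessian is `Q(X, Y) = 2⟨πX, πY⟩`, where `π(U, V) = V - L U`
is the derivative of `(q, p) ↦ p - A(q)`, so everything reduces to evaluating `π` on the frame. It
kills tangent vectors to `Σ` and sends `(W, b + L W)` to `b`. Since `Lᵀ - L` acts as the cross
product with the curl, it sends `(v, Lᵀ v)` to `v × B`. For `u ⊥ B`, Lagrange's identity gives
`⟨u × B, v × B⟩ = ⟨u, v⟩ ‖B‖²`, which the factors `‖B‖^(-1/2)` turn into `⟨u, v⟩ ‖B‖`; and `v × B`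
is orthogonal to `b`, a multiple of `B`.
-/

lemma rpow_neg_one_div_two_mul_self {x : ℝ} (hx : 0 ≤ x) :
    x ^ (-(1 : ℝ) / 2) * x ^ (-(1 : ℝ) / 2) = x⁻¹ := by
  rw [← Real.rpow_add' hx (by norm_num), ← Real.rpow_neg_one]
  norm_num

lemma norm3_nonneg (v : Fin 3 → ℝ) : 0 ≤ norm3 v :=
  Real.sqrt_nonneg _

lemma norm3_mul_self (v : Fin 3 → ℝ) : norm3 v * norm3 v = v ⬝ᵥ v :=
  Real.mul_self_sqrt (dotProduct_self_star_nonneg v)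

lemma norm3_eq_zero {v : Fin 3 → ℝ} : norm3 v = 0 ↔ v = 0 := by
  rw [← mul_self_eq_zero, norm3_mul_self, dotProduct_self_eq_zero]

lemma inv_norm3_smul_dotProduct_self {v : Fin 3 → ℝ} (hv : v ≠ 0) :
    ((norm3 v)⁻¹ • v) ⬝ᵥ ((norm3 v)⁻¹ • v) = 1 := by
  have hn : norm3 v ≠ 0 := norm3_eq_zero.not.mpr hv
  rw [smul_dotProduct, dotProduct_smul, ← norm3_mul_self, smul_eq_mul, smul_eq_mul]
  field_simp

lemma inv_norm3_smul_dotProduct_eq_zero {v w : Fin 3 → ℝ} :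
    ((norm3 v)⁻¹ • v) ⬝ᵥ w = 0 ↔ v ⬝ᵥ w = 0 := by
  rw [smul_dotProduct, smul_eq_zero, inv_eq_zero, norm3_eq_zero]
  exact or_iff_right_of_imp fun hv => by rw [hv, zero_dotProduct]

/-- The axial vector of the antisymmetric matrix `M - Mᵀ`, normalized so that the axial vector of a
Jacobian matrix is the curl. -/
def axialVector {R : Type*} [Sub R] (M : Matrix (Fin 3) (Fin 3) R) : Fin 3 → R :=
  ![M 2 1 - M 1 2, M 0 2 - M 2 0, M 1 0 - M 0 1]

lemma transpose_mulVec_sub_mulVec {R : Type*} [CommRing R] (M : Matrix (Fin 3) (Fin 3) R)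
    (v : Fin 3 → R) : Mᵀ *ᵥ v - M *ᵥ v = v ⨯₃ axialVector M := by
  ext i
  fin_cases i <;>
    simp [axialVector, cross_apply, mulVec, dotProduct, Fin.sum_univ_three] <;> ring

lemma adjoint3_eq_transpose_mulVec (L : (Fin 3 → ℝ) →L[ℝ] (Fin 3 → ℝ)) (w : Fin 3 → ℝ) :
    adjoint3 L w = (LinearMap.toMatrix' (L : (Fin 3 → ℝ) →ₗ[ℝ] (Fin 3 → ℝ)))ᵀ *ᵥ w := by
  ext i
  simp [adjoint3, mulVec, dotProduct, LinearMap.toMatrix'_apply]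

section VectorPotential

variable {A : (Fin 3 → ℝ) → (Fin 3 → ℝ)} {q : Fin 3 → ℝ}

lemma curl_eq_axialVector_toMatrix' (hA : DifferentiableAt ℝ A q) :
    curl A q =
      axialVector (LinearMap.toMatrix' (fderiv ℝ A q : (Fin 3 → ℝ) →ₗ[ℝ] (Fin 3 → ℝ))) := by
  have hcoord (i : Fin 3) (u : Fin 3 → ℝ) :
      fderiv ℝ (fun x => A x i) q u = fderiv ℝ A q u i :=
    DFunLike.congr_fun (fderiv_apply hA i) u
  simp only [curl, axialVector, hcoord, LinearMap.toMatrix'_apply, ContinuousLinearMap.coe_coe]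

lemma adjoint3_fderiv_sub_fderiv (hA : DifferentiableAt ℝ A q) (v : Fin 3 → ℝ) :
    adjoint3 (fderiv ℝ A q) v - fderiv ℝ A q v = v ⨯₃ curl A q := by
  rw [curl_eq_axialVector_toMatrix' hA, ← transpose_mulVec_sub_mulVec,
    adjoint3_eq_transpose_mulVec, LinearMap.toMatrix'_mulVec, ContinuousLinearMap.coe_coe]

end VectorPotential

section KineticMomentum

variable {E F : Type*} [NormedAddCommGroup E] [NormedSpace ℝ E]
  [NormedAddCommGroup F] [NormedSpace ℝ F]

/-- The derivative `(U, V) ↦ V - DA(q) U` of the kinetic momentum `(q, p) ↦ p - A(q)`; its kernel is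
the tangent space of the characteristic manifold at `(q, A(q))`. -/
def kineticMomentumDeriv (A : E → F) (q : E) : E × F →L[ℝ] F :=
  ContinuousLinearMap.snd ℝ E F - (fderiv ℝ A q).comp (ContinuousLinearMap.fst ℝ E F)

lemma kineticMomentumDeriv_apply (A : E → F) (q : E) (X : E × F) :
    kineticMomentumDeriv A q X = X.2 - fderiv ℝ A q X.1 :=
  rfl

lemma kineticMomentumDeriv_add_fderiv (A : E → F) (q : E) (W : E) (b : F) :
    kineticMomentumDeriv A q (W, b + fderiv ℝ A q W) = b :=
  add_sub_cancel_right b _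

lemma kineticMomentumDeriv_tangent (A : E → F) (q : E) (U : E) :
    kineticMomentumDeriv A q (U, fderiv ℝ A q U) = 0 :=
  sub_self _

end KineticMomentum

section Hessian

variable {A : (Fin 3 → ℝ) → (Fin 3 → ℝ)} {q : Fin 3 → ℝ}

lemma kineticMomentumDeriv_adjoint3 (hA : DifferentiableAt ℝ A q) (v : Fin 3 → ℝ) :
    kineticMomentumDeriv A q (v, adjoint3 (fderiv ℝ A q) v) = v ⨯₃ curl A q :=
  adjoint3_fderiv_sub_fderiv hA v

lemma hessQ_eq_dotProduct (X Y : (Fin 3 → ℝ) × (Fin 3 → ℝ)) :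
    hessQ A q X Y = 2 * (kineticMomentumDeriv A q X ⬝ᵥ kineticMomentumDeriv A q Y) :=
  rfl

lemma hessQ_tangent (U : Fin 3 → ℝ) (X : (Fin 3 → ℝ) × (Fin 3 → ℝ)) :
    hessQ A q (U, fderiv ℝ A q U) X = 0 := by
  rw [hessQ_eq_dotProduct, kineticMomentumDeriv_tangent, zero_dotProduct, mul_zero]

lemma hessQ_add_fderiv_self (W b : Fin 3 → ℝ) :
    hessQ A q (W, b + fderiv ℝ A q W) (W, b + fderiv ℝ A q W) = 2 * (b ⬝ᵥ b) := by
  rw [hessQ_eq_dotProduct, kineticMomentumDeriv_add_fderiv]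

lemma hessQ_smul_adjoint3_add_fderiv (hA : DifferentiableAt ℝ A q) (r t : ℝ) (v W : Fin 3 → ℝ) :
    hessQ A q (r • (v, adjoint3 (fderiv ℝ A q) v)) (W, t • curl A q + fderiv ℝ A q W) = 0 := by
  have horth : (v ⨯₃ curl A q) ⬝ᵥ curl A q = 0 := by rw [dotProduct_comm, dot_cross_self]
  rw [hessQ_eq_dotProduct, map_smul, kineticMomentumDeriv_adjoint3 hA,
    kineticMomentumDeriv_add_fderiv, smul_dotProduct, dotProduct_smul, horth, smul_zero,
    smul_zero, mul_zero]

lemma hessQ_smul_adjoint3_of_dotProduct_curl_eq_zero (hA : DifferentiableAt ℝ A q)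
    {u : Fin 3 → ℝ} (hu : curl A q ⬝ᵥ u = 0) (v : Fin 3 → ℝ) :
    hessQ A q (norm3 (curl A q) ^ (-(1 : ℝ) / 2) • (u, adjoint3 (fderiv ℝ A q) u))
      (norm3 (curl A q) ^ (-(1 : ℝ) / 2) • (v, adjoint3 (fderiv ℝ A q) v)) =
      2 * norm3 (curl A q) * (u ⬝ᵥ v) := by
  set n := norm3 (curl A q) with hn
  set s := n ^ (-(1 : ℝ) / 2) with hs
  have hlagrange : (u ⨯₃ curl A q) ⬝ᵥ (v ⨯₃ curl A q) = (u ⬝ᵥ v) * (n * n) := by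
    rw [cross_dot_cross, dotProduct_comm u (curl A q), hu, zero_mul, sub_zero, hn, norm3_mul_self]
  calc hessQ A q (s • (u, adjoint3 (fderiv ℝ A q) u)) (s • (v, adjoint3 (fderiv ℝ A q) v))
      = 2 * (s * (s * ((u ⨯₃ curl A q) ⬝ᵥ (v ⨯₃ curl A q)))) := by
        rw [hessQ_eq_dotProduct, map_smul, map_smul, kineticMomentumDeriv_adjoint3 hA,
          kineticMomentumDeriv_adjoint3 hA, smul_dotProduct, dotProduct_smul, smul_eq_mul,
          smul_eq_mul]
    _ = 2 * (s * s * n * n) * (u ⬝ᵥ v) := by rw [hlagrange]; ring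
    _ = 2 * n * (u ⬝ᵥ v) := by
        rw [hs, rpow_neg_one_div_two_mul_self (norm3_nonneg _), inv_mul_mul_self]

end Hessian

theorem statement9_general (A : (Fin 3 → ℝ) → (Fin 3 → ℝ)) (q : Fin 3 → ℝ)
    (hA : DifferentiableAt ℝ A q) (hBq : curl A q ≠ 0)
    (b c d : Fin 3 → ℝ) (hb : b = (norm3 (curl A q))⁻¹ • curl A q)
    (hcc : c ⬝ᵥ c = 1) (hdd : d ⬝ᵥ d = 1)
    (hbc : b ⬝ᵥ c = 0) (hbd : b ⬝ᵥ d = 0) (hcd : c ⬝ᵥ d = 0)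
    (W : Fin 3 → ℝ)
    (f₄ f₅ f₆ : (Fin 3 → ℝ) × (Fin 3 → ℝ))
    (hf₄ : f₄ = ((norm3 (curl A q)) ^ (-(1 : ℝ) / 2)) • (c, adjoint3 (fderiv ℝ A q) c))
    (hf₅ : f₅ = ((norm3 (curl A q)) ^ (-(1 : ℝ) / 2)) • (d, adjoint3 (fderiv ℝ A q) d))
    (hf₆ : f₆ = (W, b + fderiv ℝ A q W)) :
    hessQ A q f₄ f₄ = 2 * norm3 (curl A q) ∧
    hessQ A q f₅ f₅ = 2 * norm3 (curl A q) ∧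
    hessQ A q f₄ f₅ = 0 ∧
    hessQ A q f₄ f₆ = 0 ∧
    hessQ A q f₅ f₆ = 0 ∧
    hessQ A q f₆ f₆ = 2 ∧
    ∀ (U : Fin 3 → ℝ) (X : (Fin 3 → ℝ) × (Fin 3 → ℝ)),
      hessQ A q (U, fderiv ℝ A q U) X = 0 := by
  subst hb hf₄ hf₅ hf₆
  rw [inv_norm3_smul_dotProduct_eq_zero] at hbc hbd
  refine ⟨?_, ?_, ?_, ?_, ?_, ?_, hessQ_tangent⟩
  · rw [hessQ_smul_adjoint3_of_dotProduct_curl_eq_zero hA hbc, hcc, mul_one]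
  · rw [hessQ_smul_adjoint3_of_dotProduct_curl_eq_zero hA hbd, hdd, mul_one]
  · rw [hessQ_smul_adjoint3_of_dotProduct_curl_eq_zero hA hbc, hcd, mul_zero]
  · exact hessQ_smul_adjoint3_add_fderiv hA _ _ c W
  · exact hessQ_smul_adjoint3_add_fderiv hA _ _ d W
  · rw [hessQ_add_fderiv_self, inv_norm3_smul_dotProduct_self hBq, mul_one]

/-- Diagonalization of the Hessian of `H` at `(q,A(q))` in the frame
`f₄ = ‖B‖^{-1/2}(c, DA ᵀc)`, `f₅ = ‖B‖^{-1/2}(d, DA ᵀd)`, `f₆ = (W, b + DA W)`: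
`Q(f₄,f₄) = Q(f₅,f₅) = 2‖B(q)‖`, the off-diagonal terms vanish, `Q(f₆,f₆) = 2`, and `Q`
vanishes on tangent vectors `(U, DA(q)U)` to `Σ`. -/
theorem statement9 (A : (Fin 3 → ℝ) → (Fin 3 → ℝ)) (hA : ContDiff ℝ (⊤ : ℕ∞) A)
    (q : Fin 3 → ℝ) (hBq : curl A q ≠ 0)
    (b c d : Fin 3 → ℝ) (hb : b = (norm3 (curl A q))⁻¹ • curl A q)
    (hcc : c ⬝ᵥ c = 1) (hdd : d ⬝ᵥ d = 1)
    (hbc : b ⬝ᵥ c = 0) (hbd : b ⬝ᵥ d = 0) (hcd : c ⬝ᵥ d = 0)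
    (hdirect : b ⬝ᵥ crossProduct c d = 1)
    (W : Fin 3 → ℝ)
    (f₄ f₅ f₆ : (Fin 3 → ℝ) × (Fin 3 → ℝ))
    (hf₄ : f₄ = ((norm3 (curl A q)) ^ (-(1 : ℝ)/2)) • (c, adjoint3 (fderiv ℝ A q) c))
    (hf₅ : f₅ = ((norm3 (curl A q)) ^ (-(1 : ℝ)/2)) • (d, adjoint3 (fderiv ℝ A q) d))
    (hf₆ : f₆ = (W, b + fderiv ℝ A q W)) :
    hessQ A q f₄ f₄ = 2 * norm3 (curl A q) ∧
    hessQ A q f₅ f₅ = 2 * norm3 (curl A q) ∧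
    hessQ A q f₄ f₅ = 0 ∧
    hessQ A q f₄ f₆ = 0 ∧
    hessQ A q f₅ f₆ = 0 ∧
    hessQ A q f₆ f₆ = 2 ∧
    ∀ (U : Fin 3 → ℝ) (X : (Fin 3 → ℝ) × (Fin 3 → ℝ)),
      hessQ A q (U, fderiv ℝ A q U) X = 0 :=
  statement9_general A q (hA.differentiable (by simp) q) hBq b c d hb hcc hdd hbc hbd hcd W
    f₄ f₅ f₆ hf₄ hf₅ hf₆
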